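/- arXiv:2201.01402 — 2 statements merged into one kernel-verified Lean document; each statement's English description precedes it below -/
import Mathlib

section
/- The elementary factorial Schur multiple zeta value ζ_{(2,1),1}((2,k₂,…,k_r;2),(2)) satisfies: ζ_{(2,1),1}((2,𝐤;2),(2)) = ζ_{(r,1)}(2,𝐤;2)·ζ(2) - 2·ζ_{skew}((2,𝐤;1,3)) - 2·ζ_{skew}((3,𝐤;1,2)) + 4·ζ_{(r,1,1)}(3,𝐤;1;2) + 2·ζ_{(r,1,1)}(2,𝐤;2;2), where ζ_{skew}((2,𝐤;1,3)) denotes the skew-hook Schur multiple zeta value Σ over m ≤ c, a < c, a ≤ b₂ ≤ ⋯ ≤ b_r of 1/(m¹ a² c³ ∏b_j^{k_j})-type series as specified by the skew diagram with the box (2,1) shifted left (i.e., Σ over positive integers m, a, c, b₂,…,b_r with a ≤ b₂ ≤ ⋯ ≤ b_r, a < c, m ≤ c of 1/(m a² (∏ b_j^{k_j}) c³)). -/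
/-- Product `∏_j b_j^{-k_j}` over the row entries `b₂ ≤ ⋯ ≤ b_r`. -/
noncomputable def rowProd {n : ℕ} (k : Fin n → ℕ) (b : Fin n → ℕ) : ℝ :=
  (∏ j, ((b j : ℝ)) ^ (k j))⁻¹

/-- Hook `(r,1)` Schur MZV with exponents `(u, 𝐤 ; v)`. -/
noncomputable def hookR1 {n : ℕ} (k : Fin n → ℕ) (u v : ℕ) : ℝ :=
  ∑' x : {x : (ℕ × ℕ) × (Fin n → ℕ) //
      0 < x.1.1 ∧ x.1.1 < x.1.2 ∧ Monotone x.2 ∧ ∀ j, x.1.1 ≤ x.2 j},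
    ((x.1.1.1 : ℝ) ^ u * (x.1.1.2 : ℝ) ^ v)⁻¹ * rowProd k x.1.2

/-- Hook `(r,1,1)` Schur MZV with column exponents `(u,v,w)` and row exponents `𝐤`:
`Σ_{m₁ < m₂ < m₃, m₁ ≤ b₂ ≤ ⋯} m₁^{-u} m₂^{-v} m₃^{-w} ∏ b_j^{-k_j}`. -/
noncomputable def hookR11 {n : ℕ} (k : Fin n → ℕ) (u v w : ℕ) : ℝ :=
  ∑' x : {x : (ℕ × ℕ × ℕ) × (Fin n → ℕ) //
      0 < x.1.1 ∧ x.1.1 < x.1.2.1 ∧ x.1.2.1 < x.1.2.2 ∧ Monotone x.2 ∧ ∀ j, x.1.1 ≤ x.2 j},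
    ((x.1.1.1 : ℝ) ^ u * (x.1.1.2.1 : ℝ) ^ v * (x.1.1.2.2 : ℝ) ^ w)⁻¹ * rowProd k x.1.2

/-- Skew-hook value with exponents `(u,𝐤; t, w)`: sum over `m, a, c, b₂ ≤ ⋯ ≤ b_r` with
`a ≤ b_j`, `a < c`, `m ≤ c`, of `m^{-t} a^{-u} c^{-w} ∏ b_j^{-k_j}`. -/
noncomputable def skewHook {n : ℕ} (k : Fin n → ℕ) (u t w : ℕ) : ℝ :=
  ∑' x : {x : (ℕ × ℕ × ℕ) × (Fin n → ℕ) //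
      0 < x.1.1 ∧ 0 < x.1.2.1 ∧ x.1.2.1 < x.1.2.2 ∧ x.1.1 ≤ x.1.2.2
        ∧ Monotone x.2 ∧ ∀ j, x.1.2.1 ≤ x.2 j},
    ((x.1.1.1 : ℝ) ^ t * (x.1.1.2.1 : ℝ) ^ u * (x.1.1.2.2 : ℝ) ^ w)⁻¹ * rowProd k x.1.2

/-- `ζ_{(2,1),1}((2,𝐤;2),(2)) = Σ_{m ≥ 1, fillings} 1/(m²(m+a)²(m+c)² ∏ b^k)`. -/
noncomputable def efLHS {n : ℕ} (k : Fin n → ℕ) : ℝ :=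
  ∑' x : {x : (ℕ × ℕ × ℕ) × (Fin n → ℕ) //
      0 < x.1.1 ∧ 0 < x.1.2.1 ∧ x.1.2.1 < x.1.2.2 ∧ Monotone x.2 ∧ ∀ j, x.1.2.1 ≤ x.2 j},
    ((x.1.1.1 : ℝ) ^ 2 * ((x.1.1.1 + x.1.1.2.1 : ℕ) : ℝ) ^ 2
        * ((x.1.1.1 + x.1.1.2.2 : ℕ) : ℝ) ^ 2)⁻¹ * rowProd k x.1.2

/-! Fix the corner entry `a` and collect the row `b₂ ≤ ⋯ ≤ b_r` into a weight depending only on `a`.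
The partial fraction `1/(m c) = 1/(m (m + c)) + 1/(c (m + c))`, used once with `a` in place of `c`
and once as it stands, reduces the sum over `m` of `m⁻² (m + a)⁻² (m + c)⁻²` to `ζ(2)`, to double
tails over `a < c < e`, and to the telescoping sum `∑ₘ 1/(m (m + c)) = H_c / c`. The harmonic number
`H_c = ∑_{m ≤ c} 1/m` is the detached box of the skew hooks.

Each of these steps is carried out in `ℝ≥0∞` with all terms on the side where they are positive, so
that sums may be rearranged freely. Convergence, which amounts to that of the sum over the rows,
is needed only to subtract at the very end. Rows converge because their last entry, having exponent
at least `2`, dominates the geometric mean of all `n` entries: this gives every entry an exponent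
`1 + 1/n`. -/

open Filter Finset
open scoped ENNReal NNReal Topology

section Telescoping

lemma hasSum_sub_shift_of_antitone {f : ℕ → ℝ} (hf : Antitone f) (hlim : Tendsto f atTop (𝓝 0))
    (c : ℕ) : HasSum (fun m => f m - f (m + c)) (∑ i ∈ range c, f i) := by
  rw [hasSum_iff_tendsto_nat_of_nonneg fun m => sub_nonneg.2 (hf (Nat.le_add_right m c))]
  have partial_sum (N : ℕ) : ∑ m ∈ range N, (f m - f (m + c))
      = ∑ i ∈ range c, f i - ∑ i ∈ range c, f (N + i) := by
    have h := sum_range_add f N c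
    rw [add_comm N c, sum_range_add] at h
    simp only [sum_sub_distrib, add_comm _ c]
    linarith
  have tail : Tendsto (fun N => ∑ i ∈ range c, f (N + i)) atTop (𝓝 0) := by
    simpa using tendsto_finsetSum (range c) fun i _ => hlim.comp (tendsto_add_atTop_nat i)
  simpa only [partial_sum, sub_zero] using tail.const_sub (∑ i ∈ range c, f i)

lemma hasSum_inv_sub_inv_add (c : ℕ) :
    HasSum (fun m : ℕ+ => ((m : ℕ) : ℝ)⁻¹ - ((m + c : ℕ) : ℝ)⁻¹) (harmonic c : ℝ) := by
  have anti : Antitone fun m : ℕ => ((m + 1 : ℕ) : ℝ)⁻¹ := fun i j hij => by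
    dsimp only
    gcongr
  have lim : Tendsto (fun m : ℕ => ((m + 1 : ℕ) : ℝ)⁻¹) atTop (𝓝 0) :=
    tendsto_inv_atTop_nhds_zero_nat.comp (tendsto_add_atTop_nat 1)
  have h := Equiv.pnatEquivNat.hasSum_iff.2 (hasSum_sub_shift_of_antitone anti lim c)
  convert h using 1
  · ext m
    obtain ⟨j, rfl⟩ := Equiv.pnatEquivNat.symm.surjective m
    simp [add_right_comm]
  · simp only [harmonic, Rat.cast_sum, Rat.cast_inv, Rat.cast_natCast]

end Telescoping

section Recip

/-- The extended nonnegative real `1 / m`. Working in `ℝ≥0∞` lets the sums below be rearranged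
freely; restricting to `m : ℕ+` avoids `0⁻¹ = ∞`. -/
noncomputable def recip (m : ℕ+) : ℝ≥0∞ := ((m : ℕ) : ℝ≥0∞)⁻¹

lemma recip_eq_coe (m : ℕ+) : recip m = ((((m : ℕ) : ℝ≥0)⁻¹ : ℝ≥0) : ℝ≥0∞) := by
  rw [recip, ENNReal.coe_inv (by simp), ENNReal.coe_natCast]

lemma ofReal_inv_pnat (m : ℕ+) : ENNReal.ofReal ((m : ℕ) : ℝ)⁻¹ = recip m := by
  rw [recip, ENNReal.ofReal_inv_of_pos (by positivity), ENNReal.ofReal_natCast]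

lemma toReal_recip_pow (m : ℕ+) (s : ℕ) : (recip m ^ s).toReal = (((m : ℕ) : ℝ) ^ s)⁻¹ := by
  simp [recip]

lemma recip_antitone : Antitone recip := fun _ _ h =>
  ENNReal.inv_le_inv.2 (by exact_mod_cast h)

lemma recip_le_one (m : ℕ+) : recip m ≤ 1 := by
  simpa [recip] using recip_antitone one_le

lemma recip_mul_recip (m c : ℕ+) :
    recip m * recip c = recip m * recip (m + c) + recip c * recip (m + c) := by
  simp only [recip_eq_coe]
  norm_cast
  push_cast
  field_simp
  ring

lemma ofReal_inv_pow_mul_pow (a c : ℕ+) (u v : ℕ) :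
    ENNReal.ofReal ((((a : ℕ) : ℝ) ^ u * ((c : ℕ) : ℝ) ^ v)⁻¹) = recip a ^ u * recip c ^ v := by
  rw [mul_inv, ENNReal.ofReal_mul (by positivity), ← inv_pow, ← inv_pow,
    ENNReal.ofReal_pow (by positivity), ENNReal.ofReal_pow (by positivity), ofReal_inv_pnat,
    ofReal_inv_pnat]

lemma ofReal_inv_pow_mul_pow_mul_pow (a b c : ℕ+) (u v w : ℕ) :
    ENNReal.ofReal ((((a : ℕ) : ℝ) ^ u * ((b : ℕ) : ℝ) ^ v * ((c : ℕ) : ℝ) ^ w)⁻¹)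
      = recip a ^ u * recip b ^ v * recip c ^ w := by
  rw [mul_inv, ENNReal.ofReal_mul (by positivity), ofReal_inv_pow_mul_pow, ← inv_pow,
    ENNReal.ofReal_pow (by positivity), ofReal_inv_pnat]

lemma ofReal_harmonic (c : ℕ) :
    ENNReal.ofReal (harmonic c) = ∑ i : Fin c, recip (Nat.succPNat i) := by
  simp only [← ofReal_inv_pnat]
  rw [← ENNReal.ofReal_sum_of_nonneg fun _ _ => by positivity,
    Fin.sum_univ_eq_sum_range fun i => (((Nat.succPNat i : ℕ+) : ℕ) : ℝ)⁻¹]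
  simp [harmonic]

lemma tsum_recip_mul_recip_add (c : ℕ+) :
    ∑' m : ℕ+, recip m * recip (m + c) = recip c * ENNReal.ofReal (harmonic c) := by
  have partial_fraction (m : ℕ+) : ((c : ℕ) : ℝ)⁻¹ * (((m : ℕ) : ℝ)⁻¹ - ((m + c : ℕ) : ℝ)⁻¹)
      = ((m : ℕ) : ℝ)⁻¹ * (((m + c : ℕ+) : ℕ) : ℝ)⁻¹ := by
    push_cast
    field_simp
    ring
  have h := (hasSum_inv_sub_inv_add c).mul_left ((c : ℕ) : ℝ)⁻¹
  simp only [partial_fraction] at h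
  rw [← ofReal_inv_pnat, ← ENNReal.ofReal_mul (by positivity), ← h.tsum_eq,
    ENNReal.ofReal_tsum_of_nonneg (fun m => by positivity) h.summable]
  refine tsum_congr fun m => ?_
  rw [ENNReal.ofReal_mul (by positivity), ofReal_inv_pnat, ofReal_inv_pnat]

lemma recip_pow_ne_top (m : ℕ+) (s : ℕ) : recip m ^ s ≠ ∞ :=
  ENNReal.pow_ne_top (ne_top_of_le_ne_top ENNReal.one_ne_top (recip_le_one m))

lemma tsum_recip_pow_ne_top {s : ℕ} (hs : 1 < s) : ∑' m : ℕ+, recip m ^ s ≠ ∞ := by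
  have h := (summable_pnat_iff_summable_nat.2 (Real.summable_nat_pow_inv.2 hs)).tsum_ofReal_ne_top
  simpa only [← toReal_recip_pow, ENNReal.ofReal_toReal (recip_pow_ne_top _ s)] using h

lemma tsum_inv_pow_eq_toReal (s : ℕ) :
    ∑' m : {m : ℕ // 0 < m}, (((m : ℕ) : ℝ) ^ s)⁻¹ = (∑' m : ℕ+, recip m ^ s).toReal := by
  rw [ENNReal.tsum_toReal_eq fun m => recip_pow_ne_top m s]
  exact tsum_congr fun m => (toReal_recip_pow m s).symm

lemma tsum_recip_add_sq_le (c : ℕ+) : ∑' m : ℕ+, recip (c + m) ^ 2 ≤ recip c := by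
  have anti : Antitone fun j : ℕ => ((c + j : ℕ) : ℝ)⁻¹ := fun i j hij => by
    dsimp only
    gcongr
  have lim : Tendsto (fun j : ℕ => ((c + j : ℕ) : ℝ)⁻¹) atTop (𝓝 0) := by
    simpa only [add_comm, Function.comp_def] using
      tendsto_inv_atTop_nhds_zero_nat.comp (tendsto_add_atTop_nat c)
  have telescope := hasSum_sub_shift_of_antitone anti lim 1
  rw [sum_range_one, add_zero] at telescope
  have term_le (j : ℕ) : (((c + j.succPNat : ℕ+) : ℕ) : ℝ)⁻¹ ^ 2
      ≤ ((c + j : ℕ) : ℝ)⁻¹ - ((c + (j + 1) : ℕ) : ℝ)⁻¹ := by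
    have hc : (0 : ℝ) < (c : ℕ) := by positivity
    rw [inv_sub_inv (by positivity) (by positivity), inv_pow, ← one_div]
    simp only [PNat.add_coe, Nat.succPNat_coe, Nat.succ_eq_add_one]
    push_cast
    gcongr <;> linarith
  calc ∑' m : ℕ+, recip (c + m) ^ 2
      = ∑' j : ℕ, recip (c + j.succPNat) ^ 2 := (Equiv.pnatEquivNat.symm.tsum_eq _).symm
    _ ≤ ∑' j : ℕ, ENNReal.ofReal (((c + j : ℕ) : ℝ)⁻¹ - ((c + (j + 1) : ℕ) : ℝ)⁻¹) := by
        gcongr with j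
        rw [← ofReal_inv_pnat, ← ENNReal.ofReal_pow (by positivity)]
        exact ENNReal.ofReal_le_ofReal (term_le j)
    _ = recip c := by
        rw [← ENNReal.ofReal_tsum_of_nonneg (fun j => sub_nonneg.2 (anti j.le_succ))
          telescope.summable, telescope.tsum_eq, ofReal_inv_pnat]

end Recip

section FixedCorner

/-- `∑_{a < c < e} c^{-s} e^{-t}`, parametrized by the gaps `d = c - a` and `m = e - c`. -/
noncomputable def doubleTail (a : ℕ+) (s t : ℕ) : ℝ≥0∞ :=
  ∑' (d : ℕ+) (m : ℕ+), recip (a + d) ^ s * recip (a + d + m) ^ t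

/-- `∑_{c > a} H_c c^{-s}` with `H_c` the harmonic number, parametrized by the gap `d = c - a`. -/
noncomputable def harmonicTail (a : ℕ+) (s : ℕ) : ℝ≥0∞ :=
  ∑' d : ℕ+, recip (a + d) ^ s * ENNReal.ofReal (harmonic ↑(a + d))

/-- `∑_{c > a} ∑_m m^{-2} (m + a)^{-2} (m + c)^{-2}`, the part of the elementary factorial value
with corner entry `a`, parametrized by the gap `d = c - a`. -/
noncomputable def factorialTail (a : ℕ+) : ℝ≥0∞ :=
  ∑' (d : ℕ+) (m : ℕ+), recip m ^ 2 * recip (m + a) ^ 2 * recip (m + (a + d)) ^ 2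

-- With `x = 1/m`, `y = 1/c` and `z = 1/(m + c)`, this is the square of `x - z = x z / y`, moved
-- around so that no subtraction occurs.
lemma sq_partial_fraction {R : Type*} [CommSemiring R] {x y z : R} (h : x * y = x * z + y * z) :
    x ^ 2 * z ^ 2 + 2 * y ^ 2 * (x * z) = y ^ 2 * (x ^ 2 + z ^ 2) := by
  calc x ^ 2 * z ^ 2 + 2 * y ^ 2 * (x * z)
      = x ^ 2 * z ^ 2 + 2 * (y * z) * (x * y) := by ring
    _ = (x * z + y * z) ^ 2 + y ^ 2 * z ^ 2 := by rw [h]; ring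
    _ = y ^ 2 * (x ^ 2 + z ^ 2) := by rw [← h]; ring

lemma tsum_recip_add_pow_mul_eq_doubleTail (a : ℕ+) (s t : ℕ) :
    ∑' (d : ℕ+) (m : ℕ+), recip (m + a) ^ s * recip (m + (a + d)) ^ t = doubleTail a s t := by
  rw [ENNReal.tsum_comm, doubleTail]
  simp only [← add_assoc, add_comm _ a]

lemma tsum_recip_mul_sq_add_doubleTail (a : ℕ+) :
    (∑' (d : ℕ+) (m : ℕ+), recip m * recip (m + (a + d)) ^ 2) + doubleTail a 1 2
      = harmonicTail a 2 := by
  simp only [doubleTail, harmonicTail, ← ENNReal.tsum_add]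
  refine tsum_congr fun d => ?_
  rw [pow_two (recip (a + d)), mul_assoc, ← tsum_recip_mul_recip_add, ← ENNReal.tsum_mul_left]
  refine tsum_congr fun m => ?_
  rw [add_comm (a + d) m, ← mul_assoc, mul_comm (recip (a + d)), recip_mul_recip]
  ring

lemma tsum_sq_mul_sq_add_harmonicTail (a : ℕ+) :
    (∑' (d : ℕ+) (m : ℕ+), recip m ^ 2 * recip (m + (a + d)) ^ 2) + 2 * harmonicTail a 3
      = (∑' d : ℕ+, recip (a + d) ^ 2) * (∑' m : ℕ+, recip m ^ 2) + doubleTail a 2 2 := by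
  have harmonic_term (d : ℕ+) : 2 * (recip (a + d) ^ 3 * ENNReal.ofReal (harmonic ↑(a + d)))
      = ∑' m : ℕ+, 2 * recip (a + d) ^ 2 * (recip m * recip (m + (a + d))) := by
    rw [ENNReal.tsum_mul_left, tsum_recip_mul_recip_add]
    ring
  rw [← ENNReal.tsum_mul_right]
  simp only [doubleTail, harmonicTail, ← ENNReal.tsum_mul_left, harmonic_term, ← ENNReal.tsum_add]
  refine tsum_congr fun d => tsum_congr fun m => ?_
  rw [sq_partial_fraction (recip_mul_recip m (a + d)), add_comm (a + d) m]
  ring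

lemma factorialTail_identity (a : ℕ+) :
    factorialTail a + 2 * (recip a ^ 2 * harmonicTail a 3) + 2 * (recip a ^ 3 * harmonicTail a 2)
      = recip a ^ 2 * (∑' d : ℕ+, recip (a + d) ^ 2) * (∑' m : ℕ+, recip m ^ 2)
        + 4 * (recip a ^ 3 * doubleTail a 1 2) + 2 * (recip a ^ 2 * doubleTail a 2 2) := by
  set P := ∑' (d : ℕ+) (m : ℕ+), recip m * recip (m + a) * recip (m + (a + d)) ^ 2
  set B := ∑' (d : ℕ+) (m : ℕ+), recip m ^ 2 * recip (m + (a + d)) ^ 2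
  set G := ∑' (d : ℕ+) (m : ℕ+), recip m * recip (m + (a + d)) ^ 2
  have split_squares :
      factorialTail a + 2 * recip a ^ 2 * P = recip a ^ 2 * (B + doubleTail a 2 2) := by
    rw [← tsum_recip_add_pow_mul_eq_doubleTail]
    simp only [factorialTail, P, B, ← ENNReal.tsum_mul_left, ← ENNReal.tsum_add]
    refine tsum_congr fun d => tsum_congr fun m => ?_
    rw [← mul_assoc, ← add_mul, sq_partial_fraction (recip_mul_recip m a)]
    ring
  have split_product : P + recip a * doubleTail a 1 2 = recip a * G := by
    rw [← tsum_recip_add_pow_mul_eq_doubleTail]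
    simp only [P, G, ← ENNReal.tsum_mul_left, ← ENNReal.tsum_add]
    refine tsum_congr fun d => tsum_congr fun m => ?_
    rw [pow_one, ← mul_assoc (recip a), ← add_mul, ← recip_mul_recip m a]
    ring
  have hG : G + doubleTail a 1 2 = harmonicTail a 2 := tsum_recip_mul_sq_add_doubleTail a
  have hB : B + 2 * harmonicTail a 3 = _ := tsum_sq_mul_sq_add_harmonicTail a
  calc factorialTail a + 2 * (recip a ^ 2 * harmonicTail a 3) + 2 * (recip a ^ 3 * harmonicTail a 2)
      = factorialTail a + 2 * recip a ^ 2 * (recip a * G) + 2 * recip a ^ 2 * harmonicTail a 3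
          + 2 * recip a ^ 3 * doubleTail a 1 2 := by rw [← hG]; ring
    _ = (factorialTail a + 2 * recip a ^ 2 * P) + 2 * recip a ^ 2 * harmonicTail a 3
          + 4 * recip a ^ 3 * doubleTail a 1 2 := by rw [← split_product]; ring
    _ = recip a ^ 2 * (B + 2 * harmonicTail a 3) + recip a ^ 2 * doubleTail a 2 2
          + 4 * recip a ^ 3 * doubleTail a 1 2 := by rw [split_squares]; ring
    _ = _ := by rw [hB]; ring

lemma tsum_recip_add_pow_le (a : ℕ+) (s : ℕ) :
    ∑' d : ℕ+, recip (a + d) ^ s ≤ ∑' m : ℕ+, recip m ^ s := by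
  gcongr with d
  exact recip_antitone (PNat.lt_add_left d a).le

lemma doubleTail_le {s : ℕ} (hs : 1 ≤ s) (a : ℕ+) : doubleTail a s 2 ≤ ∑' m : ℕ+, recip m ^ 2 := by
  calc doubleTail a s 2
      ≤ ∑' d : ℕ+, recip (a + d) * ∑' m : ℕ+, recip (a + d + m) ^ 2 := by
        simp only [doubleTail, ENNReal.tsum_mul_left]
        gcongr with d
        exact pow_le_of_le_one zero_le (recip_le_one _) (by omega)
    _ ≤ ∑' d : ℕ+, recip (a + d) ^ 2 := by
        gcongr with d
        rw [pow_two]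
        gcongr
        exact tsum_recip_add_sq_le _
    _ ≤ ∑' m : ℕ+, recip m ^ 2 := tsum_recip_add_pow_le a 2

end FixedCorner

section Rows

variable {n : ℕ} (k : Fin n → ℕ)

lemma rowProd_nonneg (b : Fin n → ℕ) : 0 ≤ rowProd k b := by
  unfold rowProd
  positivity

/-- The total weight of the rows `b₂ ≤ ⋯ ≤ b_r` with all entries at least `a`. -/
noncomputable def rowSum (a : ℕ) : ℝ≥0∞ :=
  ∑' b : {b : Fin n → ℕ // Monotone b ∧ ∀ j, a ≤ b j}, ENNReal.ofReal (rowProd k b)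

/-- `∑_a f a`, weighted by the rows that can stand in a hook with corner entry `a`. -/
noncomputable def cornerSum (f : ℕ+ → ℝ≥0∞) : ℝ≥0∞ := ∑' a : ℕ+, rowSum k a * f a

lemma rowSum_antitone : Antitone (rowSum k) := fun _ _ h =>
  ENNReal.tsum_mono_subtype (fun b => ENNReal.ofReal (rowProd k b))
    fun _ hb => ⟨hb.1, fun j => h.trans (hb.2 j)⟩

lemma cornerSum_add (f g : ℕ+ → ℝ≥0∞) :
    cornerSum k (fun a => f a + g a) = cornerSum k f + cornerSum k g := by
  simp only [cornerSum, mul_add, ENNReal.tsum_add]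

lemma cornerSum_const_mul (C : ℝ≥0∞) (f : ℕ+ → ℝ≥0∞) :
    cornerSum k (fun a => C * f a) = C * cornerSum k f := by
  simp only [cornerSum, mul_left_comm _ C, ENNReal.tsum_mul_left]

lemma cornerSum_mul_const (f : ℕ+ → ℝ≥0∞) (C : ℝ≥0∞) :
    cornerSum k (fun a => f a * C) = cornerSum k f * C := by
  simp only [cornerSum, ← mul_assoc, ENNReal.tsum_mul_right]

variable {k}

lemma cornerSum_ne_top (hk : rowSum k 1 ≠ ∞) {u : ℕ} (hu : 1 < u) {f : ℕ+ → ℝ≥0∞} {C : ℝ≥0∞}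
    (hC : C ≠ ∞) (hf : ∀ a, f a ≤ C) : cornerSum k (fun a => recip a ^ u * f a) ≠ ∞ := by
  have bound : cornerSum k (fun a => recip a ^ u * f a)
      ≤ ∑' a : ℕ+, rowSum k 1 * (recip a ^ u * C) := by
    refine ENNReal.tsum_le_tsum fun a => ?_
    exact mul_le_mul' (rowSum_antitone k a.pos) (mul_le_mul' le_rfl (hf a))
  refine ne_top_of_le_ne_top ?_ bound
  rw [ENNReal.tsum_mul_left, ENNReal.tsum_mul_right]
  exact ENNReal.mul_ne_top hk (ENNReal.mul_ne_top (tsum_recip_pow_ne_top hu) hC)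

end Rows

section Hooks

variable {n : ℕ} (k : Fin n → ℕ)

/- `φ` parametrizes the entries outside the row, the first component being the corner. -/
lemma tsum_fillings_eq_toReal {X : Type*} {Z : ℕ+ → Type*} {φ : (Σ a, Z a) → X}
    (hφ : Function.Injective φ) {F : X → ℝ} (hF : ∀ x, 0 ≤ F x) {p : X × (Fin n → ℕ) → Prop}
    (hp : ∀ x b, p (x, b) ↔ ∃ y, φ y = x ∧ Monotone b ∧ ∀ j, y.1 ≤ b j) :
    ∑' x : {x // p x}, F x.1.1 * rowProd k x.1.2
      = (cornerSum k fun a => ∑' z : Z a, ENNReal.ofReal (F (φ ⟨a, z⟩))).toReal := by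
  let e : (Σ y : Σ a, Z a, {b : Fin n → ℕ // Monotone b ∧ ∀ j, y.1 ≤ b j}) ≃ {x // p x} :=
    Equiv.ofBijective (fun w => ⟨(φ w.1, w.2), (hp _ _).2 ⟨w.1, rfl, w.2.2⟩⟩) <| by
      constructor
      · rintro ⟨y, b, hb⟩ ⟨y', b', hb'⟩ h
        simp only [Subtype.mk.injEq, Prod.mk.injEq] at h
        obtain ⟨hy, rfl⟩ := h
        obtain rfl := hφ hy
        rfl
      · rintro ⟨⟨x, b⟩, hx⟩
        obtain ⟨y, rfl, hb⟩ := (hp x b).1 hx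
        exact ⟨⟨y, b, hb⟩, rfl⟩
  have term_eq (x : {x // p x}) : F x.1.1 * rowProd k x.1.2
      = (ENNReal.ofReal (F x.1.1 * rowProd k x.1.2)).toReal :=
    (ENNReal.toReal_ofReal (mul_nonneg (hF _) (rowProd_nonneg k _))).symm
  rw [tsum_congr term_eq, ← ENNReal.tsum_toReal_eq fun _ => ENNReal.ofReal_ne_top,
    ← e.tsum_eq, ENNReal.tsum_sigma', ENNReal.tsum_sigma']
  refine congrArg ENNReal.toReal (tsum_congr fun a => ?_)
  rw [← ENNReal.tsum_mul_left]
  refine tsum_congr fun z => ?_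
  rw [rowSum, ← ENNReal.tsum_mul_right]
  refine tsum_congr fun b => ?_
  rw [mul_comm, ENNReal.ofReal_mul (rowProd_nonneg k _)]
  rfl

lemma exists_pnat_add_eq {a : ℕ+} {c : ℕ} (h : a < c) : ∃ d : ℕ+, ((a + d : ℕ+) : ℕ) = c := by
  obtain ⟨d, rfl⟩ := Nat.exists_eq_add_of_lt h
  exact ⟨d.succPNat, rfl⟩

lemma hookR1_eq_toReal (u v : ℕ) :
    hookR1 k u v
      = (cornerSum k fun a => recip a ^ u * ∑' d : ℕ+, recip (a + d) ^ v).toReal := by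
  simp only [← ENNReal.tsum_mul_left, ← ofReal_inv_pow_mul_pow]
  refine tsum_fillings_eq_toReal k (Z := fun _ => ℕ+)
    (φ := fun y => (((y.1 : ℕ+) : ℕ), ((y.1 + y.2 : ℕ+) : ℕ))) ?_
    (F := fun x => ((x.1 : ℝ) ^ u * (x.2 : ℝ) ^ v)⁻¹) (fun x => by positivity) ?_
  · rintro ⟨a, d⟩ ⟨a', d'⟩ h
    simp only [Prod.mk.injEq, PNat.coe_inj] at h
    obtain ⟨rfl, hd⟩ := h
    rw [add_left_cancel hd]
  · rintro ⟨a, c⟩ b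
    constructor
    · rintro ⟨ha, hac, hb⟩
      lift a to ℕ+ using ha
      obtain ⟨d, rfl⟩ := exists_pnat_add_eq hac
      exact ⟨⟨a, d⟩, rfl, hb⟩
    · rintro ⟨⟨a, d⟩, h, hb⟩
      obtain ⟨rfl, rfl⟩ := Prod.mk.inj h
      exact ⟨a.pos, PNat.lt_add_right a d, hb⟩

lemma hookR11_eq_toReal (u v w : ℕ) :
    hookR11 k u v w = (cornerSum k fun a => recip a ^ u * doubleTail a v w).toReal := by
  simp only [doubleTail, ← ENNReal.tsum_prod, ← ENNReal.tsum_mul_left, ← mul_assoc,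
    ← ofReal_inv_pow_mul_pow_mul_pow]
  refine tsum_fillings_eq_toReal k (Z := fun _ => ℕ+ × ℕ+)
    (φ := fun y => (((y.1 : ℕ+) : ℕ), ((y.1 + y.2.1 : ℕ+) : ℕ), ((y.1 + y.2.1 + y.2.2 : ℕ+) : ℕ)))
    ?_ (F := fun x => ((x.1 : ℝ) ^ u * (x.2.1 : ℝ) ^ v * (x.2.2 : ℝ) ^ w)⁻¹)
    (fun x => by positivity) ?_
  · rintro ⟨a, d, m⟩ ⟨a', d', m'⟩ h
    simp only [Prod.mk.injEq, PNat.coe_inj] at h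
    obtain ⟨rfl, hd, hm⟩ := h
    obtain rfl := add_left_cancel hd
    rw [add_left_cancel hm]
  · rintro ⟨a, c, e⟩ b
    constructor
    · rintro ⟨ha, hac, hce, hb⟩
      lift a to ℕ+ using ha
      obtain ⟨d, rfl⟩ := exists_pnat_add_eq hac
      obtain ⟨m, rfl⟩ := exists_pnat_add_eq hce
      exact ⟨⟨a, d, m⟩, rfl, hb⟩
    · rintro ⟨⟨a, d, m⟩, h, hb⟩
      obtain ⟨rfl, rfl, rfl⟩ := by simpa only [Prod.mk.injEq] using h
      exact ⟨a.pos, PNat.lt_add_right a d, PNat.lt_add_right (a + d) m, hb⟩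

lemma efLHS_eq_toReal : efLHS k = (cornerSum k factorialTail).toReal := by
  unfold factorialTail
  simp only [← ENNReal.tsum_prod, ← ofReal_inv_pow_mul_pow_mul_pow]
  refine tsum_fillings_eq_toReal k (Z := fun _ => ℕ+ × ℕ+)
    (φ := fun y => ((y.2.2 : ℕ), ((y.1 : ℕ+) : ℕ), ((y.1 + y.2.1 : ℕ+) : ℕ))) ?_
    (F := fun x => ((x.1 : ℝ) ^ 2 * ((x.1 + x.2.1 : ℕ) : ℝ) ^ 2
      * ((x.1 + x.2.2 : ℕ) : ℝ) ^ 2)⁻¹) (fun x => by positivity) ?_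
  · rintro ⟨a, d, m⟩ ⟨a', d', m'⟩ h
    simp only [Prod.mk.injEq, PNat.coe_inj] at h
    obtain ⟨rfl, rfl, hd⟩ := h
    rw [add_left_cancel hd]
  · rintro ⟨m, a, c⟩ b
    constructor
    · rintro ⟨hm, ha, hac, hb⟩
      lift m to ℕ+ using hm
      lift a to ℕ+ using ha
      obtain ⟨d, rfl⟩ := exists_pnat_add_eq hac
      exact ⟨⟨a, d, m⟩, rfl, hb⟩
    · rintro ⟨⟨a, d, m⟩, h, hb⟩
      obtain ⟨rfl, rfl, rfl⟩ := by simpa only [Prod.mk.injEq] using h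
      exact ⟨m.pos, a.pos, PNat.lt_add_right a d, hb⟩

lemma skewHook_eq_toReal (u w : ℕ) :
    skewHook k u 1 w = (cornerSum k fun a => recip a ^ u * harmonicTail a w).toReal := by
  have harmonic_term (a d : ℕ+) :
      recip a ^ u * (recip (a + d) ^ w * ENNReal.ofReal (harmonic ↑(a + d)))
        = ∑' i : Fin ↑(a + d), recip (Nat.succPNat i) ^ 1 * recip a ^ u * recip (a + d) ^ w := by
    rw [ofReal_harmonic, tsum_fintype, ← sum_mul, ← sum_mul]
    simp only [pow_one]
    ring
  simp only [harmonicTail, ← ENNReal.tsum_mul_left, harmonic_term,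
    ← ofReal_inv_pow_mul_pow_mul_pow, ← ENNReal.tsum_sigma]
  refine tsum_fillings_eq_toReal k (Z := fun a => Σ d : ℕ+, Fin ↑(a + d))
    (φ := fun y => ((Nat.succPNat y.2.2 : ℕ), ((y.1 : ℕ+) : ℕ), ((y.1 + y.2.1 : ℕ+) : ℕ))) ?_
    (F := fun x => ((x.1 : ℝ) ^ 1 * (x.2.1 : ℝ) ^ u * (x.2.2 : ℝ) ^ w)⁻¹)
    (fun x => by positivity) ?_
  · rintro ⟨a, d, i⟩ ⟨a', d', i'⟩ h
    obtain ⟨hi, ha, hd⟩ := by simpa only [Prod.mk.injEq] using h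
    obtain rfl := PNat.coe_injective ha
    obtain rfl := add_left_cancel (PNat.coe_injective hd)
    obtain rfl := Fin.ext (Nat.succ_injective hi)
    rfl
  · rintro ⟨m, a, c⟩ b
    constructor
    · rintro ⟨hm, ha, hac, hmc, hb⟩
      lift a to ℕ+ using ha
      obtain ⟨d, rfl⟩ := exists_pnat_add_eq hac
      obtain ⟨i, rfl⟩ := Nat.exists_eq_add_one_of_ne_zero hm.ne'
      exact ⟨⟨a, d, i, hmc⟩, rfl, hb⟩
    · rintro ⟨⟨a, d, i⟩, h, hb⟩
      obtain ⟨rfl, rfl, rfl⟩ := by simpa only [Prod.mk.injEq] using h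
      exact ⟨Nat.succ_pos i, a.pos, PNat.lt_add_right a d, i.isLt, hb⟩

end Hooks

section RowConvergence

lemma summable_prod_apply {ι : Type*} {n : ℕ} {f : Fin n → ι → ℝ} (hf : ∀ j, Summable (f j))
    (hf_nonneg : ∀ j i, 0 ≤ f j i) : Summable fun b : Fin n → ι => ∏ j, f j (b j) := by
  induction n with
  | zero => exact (hasSum_fintype _).summable
  | succ n ih =>
    have tail := ih (fun j => hf j.succ) fun j => hf_nonneg j.succ
    rw [← (Fin.consEquiv fun _ : Fin (n + 1) => ι).summable_iff]
    simpa only [Function.comp_def, Fin.consEquiv_apply, Fin.prod_univ_succ, Fin.cons_zero,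
      Fin.cons_succ] using (hf 0).mul_of_nonneg tail (hf_nonneg 0)
        fun b => prod_nonneg fun j _ => hf_nonneg j.succ (b j)

variable {ι : Type*} [Fintype ι] {x : ι → ℝ} {l : ι}

lemma prod_rpow_inv_card_le (hx : ∀ j, 0 ≤ x j) (hl : ∀ j, x j ≤ x l) :
    (∏ j, x j) ^ (Fintype.card ι : ℝ)⁻¹ ≤ x l := by
  have hcard : Fintype.card ι ≠ 0 := (Fintype.card_pos_iff.2 ⟨l⟩).ne'
  have prod_le : ∏ j, x j ≤ x l ^ Fintype.card ι :=
    (prod_le_prod (fun j _ => hx j) fun j _ => hl j).trans_eq (by simp)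
  calc (∏ j, x j) ^ (Fintype.card ι : ℝ)⁻¹
      ≤ (x l ^ Fintype.card ι) ^ (Fintype.card ι : ℝ)⁻¹ := by
        gcongr
        exact prod_nonneg fun j _ => hx j
    _ = x l := Real.pow_rpow_inv_natCast (hx l) hcard

lemma prod_mul_le_prod_pow {k : ι → ℕ} (hx : ∀ j, 1 ≤ x j) (hk : ∀ j, 1 ≤ k j) (hl : 2 ≤ k l) :
    (∏ j, x j) * x l ≤ ∏ j, x j ^ k j := by
  classical
  have hx0 (j : ι) : 0 ≤ x j := zero_le_one.trans (hx j)
  rw [← mul_prod_erase univ x (mem_univ l), ← mul_prod_erase univ (fun j => x j ^ k j) (mem_univ l),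
    mul_right_comm, ← pow_two]
  exact mul_le_mul (pow_le_pow_right₀ (hx l) hl)
    (prod_le_prod (fun j _ => hx0 j) fun j _ =>
      le_self_pow₀ (hx j) (Nat.one_le_iff_ne_zero.1 (hk j)))
    (prod_nonneg fun j _ => hx0 j) (pow_nonneg (hx0 l) _)

lemma rowProd_le_prod_rpow {n : ℕ} {k b : Fin n → ℕ} {l : Fin n} (hk : ∀ j, 1 ≤ k j)
    (hl : 2 ≤ k l) (hb : ∀ j, 1 ≤ b j) (hbl : ∀ j, b j ≤ b l) :
    rowProd k b ≤ ∏ j, (b j : ℝ) ^ (-(1 + (n : ℝ)⁻¹)) := by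
  have hb_real (j : Fin n) : (1 : ℝ) ≤ b j := by exact_mod_cast hb j
  have prod_pos : 0 < ∏ j, (b j : ℝ) := prod_pos fun j _ => zero_lt_one.trans_le (hb_real j)
  have last_ge : (∏ j, (b j : ℝ)) ^ (n : ℝ)⁻¹ ≤ b l := by
    simpa only [Fintype.card_fin] using
      prod_rpow_inv_card_le (fun j => Nat.cast_nonneg (b j)) fun j => Nat.cast_le.2 (hbl j)
  rw [Real.finsetProd_rpow _ _ fun j _ => Nat.cast_nonneg _, Real.rpow_neg prod_pos.le, rowProd]
  refine inv_anti₀ (by positivity) ?_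
  calc (∏ j, (b j : ℝ)) ^ (1 + (n : ℝ)⁻¹)
      = (∏ j, (b j : ℝ)) * (∏ j, (b j : ℝ)) ^ (n : ℝ)⁻¹ := by
        rw [Real.rpow_add prod_pos, Real.rpow_one]
    _ ≤ (∏ j, (b j : ℝ)) * b l := by gcongr
    _ ≤ ∏ j, (b j : ℝ) ^ k j := prod_mul_le_prod_pow hb_real hk hl

lemma summable_rowProd {n : ℕ} {k : Fin n → ℕ} {l : Fin n} (hk : ∀ j, 1 ≤ k j) (hl : 2 ≤ k l)
    (hlast : ∀ j, j ≤ l) :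
    Summable fun b : {b : Fin n → ℕ // Monotone b ∧ ∀ j, 1 ≤ b j} => rowProd k b := by
  have exponent : -(1 + (n : ℝ)⁻¹) < -1 := by
    have : (0 : ℝ) < n := by exact_mod_cast l.pos
    linarith [inv_pos.2 this]
  have dominating := summable_prod_apply (n := n) (fun _ => Real.summable_nat_rpow.2 exponent)
    fun _ _ => by positivity
  exact (dominating.subtype _).of_nonneg_of_le (fun b => rowProd_nonneg k b) fun b =>
    rowProd_le_prod_rpow hk hl b.2.2 fun j => b.2.1 (hlast j)

end RowConvergence

section Decomposition

variable {n : ℕ} (k : Fin n → ℕ)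

lemma cornerSum_identity :
    cornerSum k factorialTail + 2 * cornerSum k (fun a => recip a ^ 2 * harmonicTail a 3)
        + 2 * cornerSum k (fun a => recip a ^ 3 * harmonicTail a 2)
      = cornerSum k (fun a => recip a ^ 2 * ∑' d : ℕ+, recip (a + d) ^ 2)
          * (∑' m : ℕ+, recip m ^ 2)
        + 4 * cornerSum k (fun a => recip a ^ 3 * doubleTail a 1 2)
        + 2 * cornerSum k (fun a => recip a ^ 2 * doubleTail a 2 2) := by
  simp only [← cornerSum_const_mul, ← cornerSum_mul_const, ← cornerSum_add]
  exact congrArg (cornerSum k) (funext factorialTail_identity)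

lemma toReal_eq_sub_sub_of_add_add_eq {x y z r : ℝ≥0∞} (h : x + y + z = r) (hr : r ≠ ∞) :
    x.toReal = r.toReal - y.toReal - z.toReal := by
  subst h
  obtain ⟨⟨hx, hy⟩, hz⟩ := by simpa only [ENNReal.add_ne_top] using hr
  rw [ENNReal.toReal_add (by finiteness) hz, ENNReal.toReal_add hx hy]
  ring

variable {k}

theorem efval_hook_decomposition_general
    (hk : Summable fun b : {b : Fin n → ℕ // Monotone b ∧ ∀ j, 1 ≤ b j} => rowProd k b) :
    efLHS k =
      hookR1 k 2 2 * (∑' m : {m : ℕ // 0 < m}, (((m : ℕ) : ℝ) ^ 2)⁻¹)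
        - 2 * skewHook k 2 1 3 - 2 * skewHook k 3 1 2
        + 4 * hookR11 k 3 1 2 + 2 * hookR11 k 2 2 2 := by
  have rows_ne_top : rowSum k 1 ≠ ∞ := hk.tsum_ofReal_ne_top
  have zeta_two_ne_top := tsum_recip_pow_ne_top one_lt_two
  have hook_ne_top := cornerSum_ne_top rows_ne_top one_lt_two zeta_two_ne_top
    fun a => tsum_recip_add_pow_le a 2
  have middle_one_ne_top := cornerSum_ne_top rows_ne_top (u := 3) (by norm_num) zeta_two_ne_top
    (doubleTail_le le_rfl)
  have middle_two_ne_top := cornerSum_ne_top rows_ne_top one_lt_two zeta_two_ne_top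
    (doubleTail_le one_le_two)
  rw [efLHS_eq_toReal, hookR1_eq_toReal, tsum_inv_pow_eq_toReal, skewHook_eq_toReal,
    skewHook_eq_toReal, hookR11_eq_toReal, hookR11_eq_toReal,
    toReal_eq_sub_sub_of_add_add_eq (cornerSum_identity k) (by finiteness),
    ENNReal.toReal_add (by finiteness) (by finiteness),
    ENNReal.toReal_add (by finiteness) (by finiteness)]
  simp only [ENNReal.toReal_mul, ENNReal.toReal_ofNat]
  ring

end Decomposition

/-- The elementary factorial value `ζ_{(2,1),1}((2,𝐤;2),(2))` satisfies
`ζ_{(2,1),1}((2,𝐤;2),(2)) = ζ_{(r,1)}(2,𝐤;2)·ζ(2) − 2ζ_skew((2,𝐤;1,3)) − 2ζ_skew((3,𝐤;1,2))`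
`+ 4ζ_{(r,1,1)}(3,𝐤;1;2) + 2ζ_{(r,1,1)}(2,𝐤;2;2)`. -/
theorem efval_hook_decomposition (n : ℕ) (hn : 1 ≤ n) (k : Fin n → ℕ)
    (hk : ∀ j, 1 ≤ k j) (hlast : 2 ≤ k ⟨n - 1, by omega⟩) :
    efLHS k =
      hookR1 k 2 2 * (∑' m : {m : ℕ // 0 < m}, (((m : ℕ) : ℝ) ^ 2)⁻¹)
        - 2 * skewHook k 2 1 3 - 2 * skewHook k 3 1 2
        + 4 * hookR11 k 3 1 2 + 2 * hookR11 k 2 2 2 :=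
  efval_hook_decomposition_general
    (summable_rowProd hk hlast fun j => Fin.le_def.2 (Nat.le_sub_one_of_lt j.isLt))
end

section
/- For the hook λ = (λ₁, 1^{r-1}) and positive-integer exponent tableau 𝐤 = (k_{ij}) with corner entries ≥ 2 as needed for convergence, the elementary factorial value with a single extra variable of exponent 1 satisfies: ζ_{λ,1}(𝐤, (1)) = ζ_{skew} − Σ_{i=1}^{r} Σ ζ_{(λ₁,1^r)}(ℓ₁,…;…), explicitly: Σ_{m ≥ 1, SSYT fillings} ∏(m+m_{i1})^{-k_{i1}} ∏ m_{1j}^{-k_{1j}} / m = [the skew Schur value with one extra box of exponent 1 adjoined at the bottom-left, i.e., Σ over fillings of the skew shape with an extra entry n satisfying n ≤ m_{r1}... as in the paper's diagram, of n^{-1} ∏ m_{ij}^{-k_{ij}}] − Σ_{i=1}^{r} Σ_{ℓ_i + ℓ_{i+1} = 1 + k_{i1}, ℓ_i, ℓ_{i+1} ≥ 1, ℓ_{r+1} ≥ 2} ζ_{(λ₁,1^r)} with column exponents (ℓ₁,…,ℓ_{r+1}) where ℓ_a = k_{a1} for a < i and ℓ_{a+1} = k_{a1} for a > i, and row exponents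 (k_{12},…,k_{1λ₁}). -/
/-- Row weight `∏_{j=2}^{λ₁} b_j^{-kr_j}` (with `λ₁ = n+1`, `b` indexed by `Fin n`,
`kr` 1-based so the `j`-th row box has exponent `kr j`). -/
noncomputable def rowWt (n : ℕ) (kr : ℕ → ℕ) (b : Fin n → ℕ) : ℝ :=
  (∏ j, ((b j : ℝ)) ^ (kr (j.val + 2)))⁻¹

/-- `ζ_{λ,1}(𝐤,(1))` for the hook `λ = (n+1, 1^{r-1})`: sum over `m ≥ 1`, column
`v₁ < ⋯ < v_r` and row `v₁ ≤ b₂ ≤ ⋯` of `m⁻¹ ∏ b_j^{-kr_j} ∏ (m+v_i)^{-kc_i}`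
(`kc` 1-based). -/
noncomputable def efOne (n r : ℕ) (hr : 0 < r) (kc kr : ℕ → ℕ) : ℝ :=
  ∑' x : {x : ℕ × (Fin r → ℕ) × (Fin n → ℕ) //
      0 < x.1 ∧ StrictMono x.2.1 ∧ 0 < x.2.1 ⟨0, hr⟩ ∧ Monotone x.2.2
        ∧ ∀ j, x.2.1 ⟨0, hr⟩ ≤ x.2.2 j},
    (x.1.1 : ℝ)⁻¹ * rowWt n kr x.1.2.2
      * (∏ i, (((x.1.1 + x.1.2.1 i : ℕ) : ℝ)) ^ (kc (i.val + 1)))⁻¹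

/-- The skew value: one extra box of exponent 1 adjoined at the bottom-left, whose entry
`m` satisfies only `m ≤ v_r`. -/
noncomputable def skewOne (n r : ℕ) (hr : 0 < r) (kc kr : ℕ → ℕ) : ℝ :=
  ∑' x : {x : ℕ × (Fin r → ℕ) × (Fin n → ℕ) //
      0 < x.1 ∧ x.1 ≤ x.2.1 ⟨r - 1, by omega⟩ ∧ StrictMono x.2.1 ∧ 0 < x.2.1 ⟨0, hr⟩
        ∧ Monotone x.2.2 ∧ ∀ j, x.2.1 ⟨0, hr⟩ ≤ x.2.2 j},
    (x.1.1 : ℝ)⁻¹ * rowWt n kr x.1.2.2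
      * (∏ i, ((x.1.2.1 i : ℝ)) ^ (kc (i.val + 1)))⁻¹

/-- Hook `(n+1, 1^r)` Schur MZV with column exponents `e` (1-based, `r+1` of them) and row
exponents `kr`. -/
noncomputable def hookVal (n r : ℕ) (e kr : ℕ → ℕ) : ℝ :=
  ∑' x : {x : (Fin (r + 1) → ℕ) × (Fin n → ℕ) //
      StrictMono x.1 ∧ 0 < x.1 0 ∧ Monotone x.2 ∧ ∀ j, x.1 0 ≤ x.2 j},
    rowWt n kr x.1.2 * (∏ a, ((x.1.1 a : ℝ)) ^ (e (a.val + 1)))⁻¹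

/-- Column exponents `(ℓ₁,…,ℓ_{r+1})` obtained from `kc` by replacing the `i`-th exponent
`kc i` with the pair `(p, 1 + kc i − p)`. -/
def splitExp (kc : ℕ → ℕ) (i p : ℕ) : ℕ → ℕ := fun a =>
  if a < i then kc a else if a = i then p else if a = i + 1 then 1 + kc i - p else kc (a - 1)

/-!
Partial fractions turn `1 / x ^ k - 1 / (m + x) ^ k` into `m` times the sum of
`1 / (x ^ p (m + x) ^ (1 + k - p))` over `1 ≤ p ≤ k`. Replace the entries of a column `v` by
`m + v` one at a time, and divide by `m`: then `∏ vᵢ ^ (-kᵢ) / m` becomes the term of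
`ζ_{λ,1}` at `m` plus the weights of the columns `v₁ < ⋯ < v_c < m + v_c < ⋯ < m + v_r`, which
run through all columns of length `r + 1` as `m` and `v` vary. The one divergent choice of
exponents, `c = r` and `p = k_r`, gives `∏ vᵢ ^ (-kᵢ) / (m + v_r)`. Subtracting it from
`∏ vᵢ ^ (-kᵢ) / m` leaves `∏ vᵢ ^ (-kᵢ) (1 / m - 1 / (m + v_r))`, whose sum over `m` telescopes
to a multiple of the harmonic number of `v_r`, the contribution of the extra box of the skew shape.
-/

theorem inv_pow_sub_inv_add_pow {K : Type*} [Field K] {x m : K} (hx : x ≠ 0) (hmx : m + x ≠ 0)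
    (k : ℕ) :
    (x ^ k)⁻¹ - ((m + x) ^ k)⁻¹ =
      m * ∑ p ∈ Finset.Icc 1 k, (x ^ p)⁻¹ * ((m + x) ^ (1 + k - p))⁻¹ := by
  have hdiff : x⁻¹ - (m + x)⁻¹ = m * (x⁻¹ * (m + x)⁻¹) := by field_simp; ring
  have hterm : ∀ p ∈ Finset.range k, (x ^ (1 + p))⁻¹ * ((m + x) ^ (1 + k - (1 + p)))⁻¹ =
      x⁻¹ * (m + x)⁻¹ * (x⁻¹ ^ p * (m + x)⁻¹ ^ (k - 1 - p)) := by
    intro p hp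
    have : 1 + k - (1 + p) = k - 1 - p + 1 := by have := Finset.mem_range.1 hp; omega
    rw [this, pow_add, pow_succ _ (k - 1 - p), mul_inv, mul_inv, pow_one, inv_pow, inv_pow]
    ring
  calc (x ^ k)⁻¹ - ((m + x) ^ k)⁻¹
      = (∑ p ∈ Finset.range k, x⁻¹ ^ p * (m + x)⁻¹ ^ (k - 1 - p)) * (x⁻¹ - (m + x)⁻¹) := by
        rw [(Commute.all _ _).geom_sum₂_mul, inv_pow, inv_pow]
    _ = m * ∑ p ∈ Finset.range k, (x ^ (1 + p))⁻¹ * ((m + x) ^ (1 + k - (1 + p)))⁻¹ := by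
        rw [hdiff, Finset.sum_congr rfl hterm, ← Finset.mul_sum]
        ring
    _ = m * ∑ p ∈ Finset.Icc 1 k, (x ^ p)⁻¹ * ((m + x) ^ (1 + k - p))⁻¹ := by
        rw [← Finset.Ico_add_one_right_eq_Icc, Finset.sum_Ico_eq_sum_range, Nat.add_sub_cancel]

section Telescoping

open Filter Topology

theorem hasSum_sub_shift_of_antitone_s12 {u : ℕ → ℝ} (hu : Antitone u)
    (h0 : Tendsto u atTop (𝓝 0)) (N : ℕ) :
    HasSum (fun m => u m - u (m + N)) (∑ j ∈ Finset.range N, u j) := by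
  have hpartial : ∀ n, ∑ m ∈ Finset.range n, (u m - u (m + N)) =
      ∑ j ∈ Finset.range N, u j - ∑ j ∈ Finset.range N, u (n + j) := by
    intro n
    have hn := Finset.sum_range_add u n N
    rw [add_comm n N, Finset.sum_range_add u N n] at hn
    simp only [Finset.sum_sub_distrib, add_comm _ N]
    linarith
  have htail : Tendsto (fun n => ∑ j ∈ Finset.range N, u (n + j)) atTop (𝓝 0) := by
    simpa using tendsto_finsetSum (Finset.range N) fun j _ => h0.comp (tendsto_add_atTop_nat j)
  rw [hasSum_iff_tendsto_nat_of_nonneg fun m => sub_nonneg.2 (hu (Nat.le_add_right m N))]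
  simpa only [hpartial, sub_zero] using htail.const_sub (∑ j ∈ Finset.range N, u j)

theorem hasSum_inv_sub_inv_add_eq_harmonic (N : ℕ) :
    HasSum (fun m : ℕ => ((m + 1 : ℕ) : ℝ)⁻¹ - ((m + 1 + N : ℕ) : ℝ)⁻¹) (harmonic N : ℝ) := by
  have hanti : Antitone fun m : ℕ => ((m + 1 : ℕ) : ℝ)⁻¹ := fun a b h =>
    inv_anti₀ (by positivity) (by exact_mod_cast Nat.add_le_add_right h 1)
  have h0 : Tendsto (fun m : ℕ => ((m + 1 : ℕ) : ℝ)⁻¹) atTop (𝓝 0) :=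
    tendsto_inv_atTop_nhds_zero_nat.comp (tendsto_add_atTop_nat 1)
  simpa [harmonic, add_right_comm] using hasSum_sub_shift_of_antitone_s12 hanti h0 N

end Telescoping

theorem hasSum_mul_inv_sub_inv_add {ι : Type*} {W : ι → ℝ} {N : ι → ℕ} {S : ℝ}
    (hW : ∀ y, 0 ≤ W y) (h : HasSum (fun y => W y * harmonic (N y)) S) :
    HasSum (fun s : ι × ℕ =>
      W s.1 * (((s.2 + 1 : ℕ) : ℝ)⁻¹ - ((s.2 + 1 + N s.1 : ℕ) : ℝ)⁻¹)) S := by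
  have hfib := fun y => (hasSum_inv_sub_inv_add_eq_harmonic (N y)).mul_left (W y)
  have hnonneg : ∀ s : ι × ℕ,
      0 ≤ W s.1 * (((s.2 + 1 : ℕ) : ℝ)⁻¹ - ((s.2 + 1 + N s.1 : ℕ) : ℝ)⁻¹) := fun s =>
    mul_nonneg (hW _) (sub_nonneg.2 (inv_anti₀ (by positivity)
      (by exact_mod_cast Nat.le_add_right (s.2 + 1) (N s.1))))
  have hsum := (summable_prod_of_nonneg hnonneg).2
    ⟨fun y => (hfib y).summable, by simpa only [(hfib _).tsum_eq] using h.summable⟩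
  exact (hsum.hasSum.prod_fiberwise hfib).unique h ▸ hsum.hasSum

theorem tsum_eq_sub_sum_tsum {α ι : Type*} {f : α → ℝ} {g : ι → α → ℝ} {s : Finset ι} {S : ℝ}
    (hf : ∀ x, 0 ≤ f x) (hg : ∀ i ∈ s, ∀ x, 0 ≤ g i x)
    (h : HasSum (fun x => f x + ∑ i ∈ s, g i x) S) :
    ∑' x, f x = S - ∑ i ∈ s, ∑' x, g i x := by
  have hgsum : ∀ x, 0 ≤ ∑ i ∈ s, g i x := fun x => Finset.sum_nonneg fun i hi => hg i hi x
  have hf_summable : Summable f := h.summable.of_nonneg_of_le hf fun x =>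
    le_add_of_nonneg_right (hgsum x)
  have hg_summable : ∀ i ∈ s, Summable (g i) := fun i hi =>
    h.summable.of_nonneg_of_le (hg i hi) fun x =>
      (Finset.single_le_sum (fun j hj => hg j hj x) hi).trans (le_add_of_nonneg_left (hf x))
  exact eq_sub_of_add_eq
    ((hf_summable.hasSum.add (hasSum_sum fun i hi => (hg_summable i hi).hasSum)).unique h)

theorem summable_pi_prod {ι : Type*} [Fintype ι] {α : ι → Type*} {f : ∀ i, α i → ℝ}
    (h0 : ∀ i a, 0 ≤ f i a) (hf : ∀ i, Summable (f i)) :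
    Summable fun x : ∀ i, α i => ∏ i, f i (x i) := by
  classical
  refine summable_of_sum_le (c := ∏ i, ∑' a, f i a)
    (fun x => Finset.prod_nonneg fun i _ => h0 i _) fun u => ?_
  calc ∑ x ∈ u, ∏ i, f i (x i)
      ≤ ∑ x ∈ Fintype.piFinset fun i => u.image (· i), ∏ i, f i (x i) :=
        Finset.sum_le_sum_of_subset_of_nonneg
          (fun x hx => Fintype.mem_piFinset.2 fun i => Finset.mem_image_of_mem _ hx)
          fun x _ _ => Finset.prod_nonneg fun i _ => h0 i _
    _ = ∏ i, ∑ a ∈ u.image (· i), f i a := (Finset.prod_univ_sum _ _).symm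
    _ ≤ ∏ i, ∑' a, f i a :=
        Finset.prod_le_prod (fun i _ => Finset.sum_nonneg fun a _ => h0 i a)
          fun i _ => (hf i).sum_le_tsum _ fun a _ => h0 i a

/-- The weight `∏ xᵢ ^ (-(1 + 1/d))`, with `d` the number of entries. It dominates every weight
`∏ xᵢ ^ (-kᵢ)` whose largest entry carries an exponent at least `2`: the surplus power of that
entry is shared out equally among all the entries. -/
noncomputable def evenWt {ι : Type*} [Fintype ι] (x : ι → ℕ) : ℝ :=
  ∏ i, ((x i : ℝ) ^ (1 + (Fintype.card ι : ℝ)⁻¹))⁻¹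

theorem evenWt_nonneg {ι : Type*} [Fintype ι] (x : ι → ℕ) : 0 ≤ evenWt x := by
  unfold evenWt
  positivity

theorem summable_evenWt (ι : Type*) [Fintype ι] : Summable (evenWt : (ι → ℕ) → ℝ) :=
  summable_pi_prod (f := fun _ (a : ℕ) => ((a : ℝ) ^ (1 + (Fintype.card ι : ℝ)⁻¹))⁻¹)
    (fun _ _ => by positivity) fun i =>
      have : Nonempty ι := ⟨i⟩
      Real.summable_nat_rpow_inv.2
        (lt_add_of_pos_right 1 (inv_pos.2 (Nat.cast_pos.2 Fintype.card_pos)))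

theorem inv_prod_pow_le_evenWt {ι : Type*} [Fintype ι] {x k : ι → ℕ} {c : ι} (hx : ∀ i, 0 < x i)
    (hc : ∀ i, x i ≤ x c) (hk : ∀ i, 1 ≤ k i) (hkc : 2 ≤ k c) :
    (∏ i, (x i : ℝ) ^ k i)⁻¹ ≤ evenWt x := by
  classical
  have hcard : (Fintype.card ι : ℝ) ≠ 0 :=
    Nat.cast_ne_zero.2 (Fintype.card_pos_iff.2 ⟨c⟩).ne'
  have hpos : ∀ i, (0 : ℝ) < x i := fun i => Nat.cast_pos.2 (hx i)
  have hone : ∀ i, (1 : ℝ) ≤ x i := fun i => Nat.one_le_cast.2 (hx i)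
  have hshare : ∏ i, (x i : ℝ) ^ (Fintype.card ι : ℝ)⁻¹ ≤ x c :=
    calc ∏ i, (x i : ℝ) ^ (Fintype.card ι : ℝ)⁻¹
        ≤ ∏ _i : ι, (x c : ℝ) ^ (Fintype.card ι : ℝ)⁻¹ :=
          Finset.prod_le_prod (fun i _ => by positivity) fun i _ =>
            Real.rpow_le_rpow (hpos i).le (Nat.cast_le.2 (hc i)) (by positivity)
      _ = x c := by
          rw [Finset.prod_const, Finset.card_univ, ← Real.rpow_natCast,
            ← Real.rpow_mul (hpos c).le, inv_mul_cancel₀ hcard, Real.rpow_one]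
  have hexp : (∏ i, (x i : ℝ)) * x c ≤ ∏ i, (x i : ℝ) ^ k i := by
    rw [← Finset.mul_prod_erase _ _ (Finset.mem_univ c),
      ← Finset.mul_prod_erase _ (fun i => (x i : ℝ) ^ k i) (Finset.mem_univ c),
      mul_right_comm, ← pow_two]
    gcongr with i
    · exact hone c
    · exact le_self_pow₀ (hone i) (Nat.one_le_iff_ne_zero.1 (hk i))
  rw [evenWt, Finset.prod_inv_distrib]
  refine inv_anti₀ (Finset.prod_pos fun i _ => Real.rpow_pos_of_pos (hpos i) _) ?_
  calc ∏ i, (x i : ℝ) ^ (1 + (Fintype.card ι : ℝ)⁻¹)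
      = (∏ i, (x i : ℝ)) * ∏ i, (x i : ℝ) ^ (Fintype.card ι : ℝ)⁻¹ := by
        simp only [Real.rpow_add (hpos _), Real.rpow_one, Finset.prod_mul_distrib]
    _ ≤ (∏ i, (x i : ℝ)) * x c := by gcongr
    _ ≤ ∏ i, (x i : ℝ) ^ k i := hexp

section Columns

variable {r : ℕ}

/-- The weight `∏ vᵢ ^ (-kᵢ)` of a column, with the exponents `k` numbered from `1`. -/
noncomputable def colWt (k : ℕ → ℕ) (v : Fin r → ℕ) : ℝ :=
  (∏ i, (v i : ℝ) ^ k (i.val + 1))⁻¹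

theorem colWt_nonneg (k : ℕ → ℕ) (v : Fin r → ℕ) : 0 ≤ colWt k v := by
  unfold colWt
  positivity

theorem pos_of_strictMono_of_pos_zero (hr : 0 < r) {v : Fin r → ℕ} (hv : StrictMono v)
    (h0 : 0 < v ⟨0, hr⟩) (i : Fin r) : 0 < v i :=
  h0.trans_le (hv.monotone (Fin.mk_le_of_le_val (Nat.zero_le _)))

theorem exists_eq_castSucc_or_exists_eq_succ (c : Fin r) (a : Fin (r + 1)) :
    (∃ j ≤ c, a = j.castSucc) ∨ ∃ j ≥ c, a = j.succ := by
  rcases le_or_gt a c.castSucc with h | h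
  · have ha : a ≠ Fin.last r := (h.trans_lt (Fin.castSucc_lt_last c)).ne
    exact .inl ⟨a.castPred ha, h, (Fin.castSucc_castPred a ha).symm⟩
  · have ha : a ≠ 0 := (h.trans_le' (Fin.zero_le _)).ne'
    exact .inr ⟨a.pred ha, Fin.le_pred_iff ha |>.2 h, (Fin.succ_pred a ha).symm⟩

theorem prod_univ_eq_mul_prod_lt_mul_prod_gt {M : Type*} [CommMonoid M] (c : Fin r)
    (g : Fin (r + 1) → M) :
    ∏ a, g a = g c.castSucc * g c.succ * (∏ j with j < c, g j.castSucc) *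
      ∏ j with c < j, g j.succ := by
  have hge : (Finset.univ.filter fun j => ¬ j < c) = insert c (Finset.univ.filter (c < ·)) := by
    ext j
    simp [le_iff_eq_or_lt, eq_comm]
  rw [Fin.prod_univ_succAbove _ c.castSucc]
  simp only [Fin.succAbove, Fin.castSucc_lt_castSucc_iff, apply_ite g, Finset.prod_ite, hge]
  rw [Finset.prod_insert (by simp)]
  ac_rfl

/-- The column `v₁ < ⋯ < v_c < m + v_c < ⋯ < m + v_r` obtained from `v₁ < ⋯ < v_r` by doubling
the entry at position `c` and adding `m` from there on. -/
def shiftCol (c : Fin r) (m : ℕ) (v : Fin r → ℕ) : Fin (r + 1) → ℕ := fun a =>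
  if a ≤ c.castSucc then v (c.predAbove a) else m + v (c.predAbove a)

/-- The inverse of `shiftCol c`, the added constant being read off as `w c.succ - w c.castSucc`. -/
def unshiftCol (c : Fin r) (w : Fin (r + 1) → ℕ) : Fin r → ℕ := fun j =>
  if j ≤ c then w j.castSucc else w j.succ - (w c.succ - w c.castSucc)

theorem shiftCol_castSucc_of_le {c j : Fin r} (h : j ≤ c) (m : ℕ) (v : Fin r → ℕ) :
    shiftCol c m v j.castSucc = v j := by
  simp [shiftCol, h, Fin.predAbove_castSucc_of_le]

theorem shiftCol_succ_of_le {c j : Fin r} (h : c ≤ j) (m : ℕ) (v : Fin r → ℕ) :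
    shiftCol c m v j.succ = m + v j := by
  simp [shiftCol, h, Fin.predAbove_succ_of_le]

theorem shiftCol_zero (hr : 0 < r) (c : Fin r) (m : ℕ) (v : Fin r → ℕ) :
    shiftCol c m v 0 = v ⟨0, hr⟩ :=
  shiftCol_castSucc_of_le (j := ⟨0, hr⟩) (Fin.mk_le_of_le_val (Nat.zero_le _)) m v

theorem unshiftCol_zero (hr : 0 < r) (c : Fin r) (w : Fin (r + 1) → ℕ) :
    unshiftCol c w ⟨0, hr⟩ = w 0 :=
  if_pos (Fin.mk_le_of_le_val (Nat.zero_le _))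

theorem shiftCol_succ_sub_castSucc (c : Fin r) (m : ℕ) (v : Fin r → ℕ) :
    shiftCol c m v c.succ - shiftCol c m v c.castSucc = m := by
  rw [shiftCol_succ_of_le le_rfl, shiftCol_castSucc_of_le le_rfl, Nat.add_sub_cancel]

theorem unshiftCol_shiftCol (c : Fin r) (m : ℕ) (v : Fin r → ℕ) :
    unshiftCol c (shiftCol c m v) = v := by
  ext j
  rw [unshiftCol, shiftCol_succ_sub_castSucc]
  split_ifs with hj
  · exact shiftCol_castSucc_of_le hj m v
  · rw [shiftCol_succ_of_le (not_le.1 hj).le, Nat.add_sub_cancel_left]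

theorem shiftCol_unshiftCol (c : Fin r) {w : Fin (r + 1) → ℕ} (hw : Monotone w) :
    shiftCol c (w c.succ - w c.castSucc) (unshiftCol c w) = w := by
  have hc : w c.castSucc ≤ w c.succ := hw (Fin.castSucc_le_succ c)
  ext a
  rcases exists_eq_castSucc_or_exists_eq_succ c a with ⟨j, hj, rfl⟩ | ⟨j, hj, rfl⟩
  · rw [shiftCol_castSucc_of_le hj, unshiftCol, if_pos hj]
  · rw [shiftCol_succ_of_le hj, unshiftCol]
    rcases hj.eq_or_lt with rfl | hlt
    · rw [if_pos le_rfl, Nat.sub_add_cancel hc]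
    · have hcj : w c.succ ≤ w j.succ := hw (Fin.succ_le_succ_iff.2 hj)
      rw [if_neg hlt.not_ge]
      omega

theorem strictMono_shiftCol (c : Fin r) {m : ℕ} (hm : 0 < m) {v : Fin r → ℕ}
    (hv : StrictMono v) : StrictMono (shiftCol c m v) := by
  intro a a' h
  rcases exists_eq_castSucc_or_exists_eq_succ c a with ⟨j, hj, rfl⟩ | ⟨j, hj, rfl⟩ <;>
    rcases exists_eq_castSucc_or_exists_eq_succ c a' with ⟨j', hj', rfl⟩ | ⟨j', hj', rfl⟩
  · rw [shiftCol_castSucc_of_le hj, shiftCol_castSucc_of_le hj']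
    exact hv (Fin.castSucc_lt_castSucc_iff.1 h)
  · rw [shiftCol_castSucc_of_le hj, shiftCol_succ_of_le hj']
    exact (hv.monotone (hj.trans hj')).trans_lt (Nat.lt_add_of_pos_left hm)
  · exact absurd (h.trans_le (Fin.castSucc_le_castSucc_iff.2 (hj'.trans hj)))
      (Fin.castSucc_lt_succ).not_gt
  · rw [shiftCol_succ_of_le hj, shiftCol_succ_of_le hj']
    exact Nat.add_lt_add_left (hv (Fin.succ_lt_succ_iff.1 h)) m

theorem strictMono_unshiftCol (c : Fin r) {w : Fin (r + 1) → ℕ} (hw : StrictMono w) :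
    StrictMono (unshiftCol c w) := by
  intro j j' h
  have hcast : w j.castSucc < w j'.castSucc := hw (Fin.castSucc_lt_castSucc_iff.2 h)
  have hsucc : w j.succ < w j'.succ := hw (Fin.succ_lt_succ_iff.2 h)
  have hc : w c.castSucc < w c.succ := hw Fin.castSucc_lt_succ
  simp only [unshiftCol]
  split_ifs with hj hj' hj'
  · exact hcast
  · have hjc : w j.castSucc ≤ w c.castSucc := hw.monotone (Fin.castSucc_le_castSucc_iff.2 hj)
    have hcj' : w c.succ < w j'.succ := hw (Fin.succ_lt_succ_iff.2 (not_le.1 hj'))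
    omega
  · exact absurd (h.le.trans hj') hj
  · have hcj : w c.succ < w j.succ := hw (Fin.succ_lt_succ_iff.2 (not_le.1 hj))
    omega

theorem colWt_splitExp_shiftCol (kc : ℕ → ℕ) (c : Fin r) (p m : ℕ) (v : Fin r → ℕ) :
    colWt (splitExp kc (c.val + 1) p) (shiftCol c m v) =
      ((v c : ℝ) ^ p)⁻¹ * (((m + v c : ℕ) : ℝ) ^ (1 + kc (c.val + 1) - p))⁻¹ *
        (∏ j with j < c, ((v j : ℝ) ^ kc (j.val + 1))⁻¹) *
        ∏ j with c < j, (((m + v j : ℕ) : ℝ) ^ kc (j.val + 1))⁻¹ := by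
  rw [colWt, ← Finset.prod_inv_distrib, prod_univ_eq_mul_prod_lt_mul_prod_gt c]
  congr 1
  · congr 1
    · rw [shiftCol_castSucc_of_le le_rfl, shiftCol_succ_of_le le_rfl]
      simp [splitExp]
    · refine Finset.prod_congr rfl fun j hj => ?_
      have hjc : j < c := (Finset.mem_filter.1 hj).2
      rw [shiftCol_castSucc_of_le hjc.le]
      simp [splitExp, hjc]
  · refine Finset.prod_congr rfl fun j hj => ?_
    have hcj : c < j := (Finset.mem_filter.1 hj).2
    rw [shiftCol_succ_of_le hcj.le]
    simp [splitExp, show ¬ j.val + 1 < c.val by omega, show j.val + 1 ≠ c.val by omega,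
      show j.val ≠ c.val by omega]

theorem colWt_splitExp_shiftCol_last (kc : ℕ → ℕ) {c : Fin r} (hc : c.val + 1 = r)
    (m : ℕ) (v : Fin r → ℕ) :
    colWt (splitExp kc (c.val + 1) (kc (c.val + 1))) (shiftCol c m v) =
      colWt kc v * ((m + v c : ℕ) : ℝ)⁻¹ := by
  have hlt : (Finset.univ.filter (· < c)) = Finset.univ.erase c := by
    ext j
    simp only [Finset.mem_filter, Finset.mem_erase, Finset.mem_univ, and_true, true_and,
      Fin.lt_def, ne_eq, Fin.ext_iff]
    omega
  have hgt : (Finset.univ.filter (c < ·)) = ∅ :=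
    Finset.filter_false_of_mem fun j _ => by rw [Fin.lt_def]; omega
  rw [colWt_splitExp_shiftCol, hlt, hgt, colWt, ← Finset.prod_inv_distrib,
    ← Finset.mul_prod_erase _ _ (Finset.mem_univ c), Finset.prod_empty, Nat.add_sub_cancel,
    pow_one]
  ring

theorem prod_univ_eq_prod_add_sum_sub_mul {ι R : Type*} [Fintype ι] [LinearOrder ι] [CommRing R]
    (f g : ι → R) :
    ∏ i, f i = ∏ i, g i +
      ∑ i, (f i - g i) * (∏ j with j < i, f j) * ∏ j with i < j, g j := by
  simpa only [add_sub_cancel] using Finset.prod_add_ordered Finset.univ g fun i => f i - g i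

theorem colWt_eq_colWt_add_mul_sum (kc : ℕ → ℕ) (m : ℕ) {v : Fin r → ℕ}
    (hv : ∀ i, 0 < v i) :
    colWt kc v = colWt kc (fun i => m + v i) +
      m * ∑ c : Fin r, ∑ p ∈ Finset.Icc 1 (kc (c.val + 1)),
        colWt (splitExp kc (c.val + 1) p) (shiftCol c m v) := by
  have hfactor : ∀ i,
      ((v i : ℝ) ^ kc (i.val + 1))⁻¹ - (((m + v i : ℕ) : ℝ) ^ kc (i.val + 1))⁻¹ =
        m * ∑ p ∈ Finset.Icc 1 (kc (i.val + 1)),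
          ((v i : ℝ) ^ p)⁻¹ * (((m + v i : ℕ) : ℝ) ^ (1 + kc (i.val + 1) - p))⁻¹ := by
    intro i
    have hpos : (0 : ℝ) < v i := Nat.cast_pos.2 (hv i)
    push_cast
    exact inv_pow_sub_inv_add_pow hpos.ne' (by positivity) _
  simp only [colWt_splitExp_shiftCol, ← Finset.sum_mul]
  rw [colWt, colWt, ← Finset.prod_inv_distrib, ← Finset.prod_inv_distrib,
    prod_univ_eq_prod_add_sum_sub_mul _ fun i => (((m + v i : ℕ) : ℝ) ^ kc (i.val + 1))⁻¹]
  simp only [hfactor, Finset.mul_sum, Finset.sum_mul, mul_assoc]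

theorem two_le_splitExp_iff {kc : ℕ → ℕ} (hkcr : 2 ≤ kc r) {c : Fin r} {p : ℕ}
    (hp : p ≤ kc (c.val + 1)) :
    2 ≤ splitExp kc (c.val + 1) p (r + 1) ↔ ¬ (c.val + 1 = r ∧ p = kc (c.val + 1)) := by
  by_cases hc : c.val + 1 = r
  · simp only [splitExp, hc, lt_add_one, not_lt_of_gt, Nat.succ_ne_self, if_true, if_false,
      true_and]
    rw [hc] at hp
    omega
  · simpa [splitExp, hc, show ¬ r < c.val by omega, show r ≠ c.val by omega,
      show r ≠ c.val + 1 by omega] using hkcr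

/-- The index set of the double sum over the ways of splitting an exponent: pairs of a position
`c` in the column, counted from `0`, and an exponent `p` such that `splitExp kc (c + 1) p` is at
least `2` in the corner. -/
def splittings (kc : ℕ → ℕ) (r : ℕ) : Finset (Σ _ : Fin r, ℕ) :=
  Finset.univ.sigma fun c =>
    (Finset.Icc 1 (kc (c.val + 1))).filter fun p => 2 ≤ splitExp kc (c.val + 1) p (r + 1)

theorem splittings_eq_erase {kc : ℕ → ℕ} (hkcr : 2 ≤ kc r) {c : Fin r}
    (hc : c.val + 1 = r) :
    splittings kc r =
      (Finset.univ.sigma fun c : Fin r => Finset.Icc 1 (kc (c.val + 1))).erase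
        ⟨c, kc (c.val + 1)⟩ := by
  ext ⟨a, p⟩
  have hac : a = c ↔ a.val + 1 = r := by rw [Fin.ext_iff]; omega
  simp only [splittings, Finset.mem_sigma, Finset.mem_filter, Finset.mem_erase, Finset.mem_univ,
    Finset.mem_Icc, true_and, ne_eq, Sigma.mk.injEq, heq_eq_eq]
  constructor
  · rintro ⟨hp, h2⟩
    refine ⟨?_, hp⟩
    rintro ⟨rfl, hpk⟩
    exact (two_le_splitExp_iff hkcr hp.2).1 h2 ⟨hc, hpk⟩
  · rintro ⟨hne, hp⟩
    refine ⟨hp, (two_le_splitExp_iff hkcr hp.2).2 ?_⟩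
    rintro ⟨ha, hpk⟩
    obtain rfl := hac.2 ha
    exact hne ⟨rfl, hpk⟩

theorem sum_splittings {M : Type*} [AddCommMonoid M] (kc : ℕ → ℕ) (r : ℕ) (f : ℕ → ℕ → M) :
    ∑ q ∈ splittings kc r, f (q.1.val + 1) q.2 =
      ∑ i ∈ Finset.Icc 1 r,
        ∑ p ∈ (Finset.Icc 1 (kc i)).filter (fun p => 2 ≤ splitExp kc i p (r + 1)), f i p := by
  rw [splittings, Finset.sum_sigma, ← Finset.Ico_add_one_right_eq_Icc,
    Finset.sum_Ico_eq_sum_range, Nat.add_sub_cancel, ← Fin.sum_univ_eq_sum_range]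
  simp only [add_comm 1]

theorem inv_mul_colWt_add_sum_splittings {kc : ℕ → ℕ} (hkcr : 2 ≤ kc r) {c : Fin r}
    (hc : c.val + 1 = r) {m : ℕ} (hm : 0 < m) {v : Fin r → ℕ} (hv : ∀ i, 0 < v i) :
    (m : ℝ)⁻¹ * colWt kc (fun i => m + v i) +
        ∑ q ∈ splittings kc r, colWt (splitExp kc (q.1.val + 1) q.2) (shiftCol q.1 m v) =
      colWt kc v * ((m : ℝ)⁻¹ - ((m + v c : ℕ) : ℝ)⁻¹) := by
  have hm' : (m : ℝ) ≠ 0 := Nat.cast_ne_zero.2 hm.ne'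
  have hkc : 1 ≤ kc (c.val + 1) := by rw [hc]; exact Nat.one_le_of_lt hkcr
  have hmem : (⟨c, kc (c.val + 1)⟩ : Σ _ : Fin r, ℕ) ∈
      Finset.univ.sigma fun c : Fin r => Finset.Icc 1 (kc (c.val + 1)) :=
    Finset.mem_sigma.2 ⟨Finset.mem_univ c, Finset.mem_Icc.2 ⟨hkc, le_rfl⟩⟩
  rw [splittings_eq_erase hkcr hc, Finset.sum_erase_eq_sub hmem, Finset.sum_sigma,
    colWt_splitExp_shiftCol_last kc hc]
  have hdiv := congrArg ((m : ℝ)⁻¹ * ·) (colWt_eq_colWt_add_mul_sum kc m hv)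
  simp only [mul_add, inv_mul_cancel_left₀ hm'] at hdiv
  linear_combination -hdiv

end Columns

/-- The semistandardness of a filling of the hook `(n + 1, 1^(r - 1))`, given as the column of
length `r` and the `n` further entries of the row. -/
abbrev IsHookFilling {n r : ℕ} (hr : 0 < r) (y : (Fin r → ℕ) × (Fin n → ℕ)) : Prop :=
  StrictMono y.1 ∧ 0 < y.1 ⟨0, hr⟩ ∧ Monotone y.2 ∧ ∀ j, y.1 ⟨0, hr⟩ ≤ y.2 j

/-- The semistandard fillings of the hook `(n + 1, 1^(r - 1))`. -/
abbrev HookFilling (n r : ℕ) (hr : 0 < r) : Type :=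
  {y : (Fin r → ℕ) × (Fin n → ℕ) // IsHookFilling hr y}

/-- Fillings of the hook `(n + 1, 1^(r - 1))` with an extra box to the left of the bottom box of
the column, the entry of the extra box being the first component. -/
abbrev SkewFilling (n r : ℕ) (hr : 0 < r) : Type :=
  {x : ℕ × (Fin r → ℕ) × (Fin n → ℕ) //
    0 < x.1 ∧ x.1 ≤ x.2.1 ⟨r - 1, by omega⟩ ∧ IsHookFilling hr x.2}

/-- Pairs with positive first component; that component is lowered by `1`. -/
def subtypePosProdEquiv {β : Type*} (P : β → Prop) :
    {x : ℕ × β // 0 < x.1 ∧ P x.2} ≃ {y // P y} × ℕ where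
  toFun x := (⟨x.1.2, x.2.2⟩, x.1.1 - 1)
  invFun s := ⟨(s.2 + 1, s.1), Nat.succ_pos _, s.1.2⟩
  left_inv x := Subtype.ext (Prod.ext (Nat.sub_add_cancel x.2.1) rfl)
  right_inv _ := rfl

/-- Pairs whose first component lies between `1` and a bound depending on the second; the first
component is lowered by `1`. -/
def subtypePosLeProdEquiv {β : Type*} (P : β → Prop) (N : β → ℕ) :
    {x : ℕ × β // 0 < x.1 ∧ x.1 ≤ N x.2 ∧ P x.2} ≃ Σ y : {y // P y}, Fin (N y) where
  toFun x := ⟨⟨x.1.2, x.2.2.2⟩, ⟨x.1.1 - 1, (Nat.sub_lt x.2.1 one_pos).trans_le x.2.2.1⟩⟩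
  invFun s := ⟨(s.2.val + 1, s.1), Nat.succ_pos _, s.2.isLt, s.1.2⟩
  left_inv x := Subtype.ext (Prod.ext (Nat.sub_add_cancel x.2.1) rfl)
  right_inv _ := rfl

theorem isHookFilling_shiftCol {n r : ℕ} {hr : 0 < r} (c : Fin r) {m : ℕ} (hm : 0 < m)
    {v : Fin r → ℕ} {b : Fin n → ℕ} (h : IsHookFilling hr (v, b)) :
    IsHookFilling r.succ_pos (shiftCol c m v, b) :=
  have h0 : shiftCol c m v 0 = v ⟨0, hr⟩ := shiftCol_zero hr c m v
  ⟨strictMono_shiftCol c hm h.1, h.2.1.trans_eq h0.symm, h.2.2.1, fun j =>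
    h0.trans_le (h.2.2.2 j)⟩

theorem isHookFilling_unshiftCol {n r : ℕ} (hr : 0 < r) (c : Fin r) {w : Fin (r + 1) → ℕ}
    {b : Fin n → ℕ} (h : IsHookFilling r.succ_pos (w, b)) :
    IsHookFilling hr (unshiftCol c w, b) :=
  have h0 : unshiftCol c w ⟨0, hr⟩ = w 0 := unshiftCol_zero hr c w
  ⟨strictMono_unshiftCol c h.1, h.2.1.trans_eq h0.symm, h.2.2.1, fun j =>
    h0.trans_le (h.2.2.2 j)⟩

/-- A filling of the hook `(n + 1, 1^(r - 1))` together with `m ≥ 1` amounts to a filling of the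
hook `(n + 1, 1^r)`, with column `shiftCol c m v`; the natural number in the pair is `m - 1`. -/
def hookFillingShiftEquiv (n : ℕ) {r : ℕ} (hr : 0 < r) (c : Fin r) :
    HookFilling n r hr × ℕ ≃ HookFilling n (r + 1) r.succ_pos where
  toFun s := ⟨(shiftCol c (s.2 + 1) s.1.1.1, s.1.1.2),
    isHookFilling_shiftCol c s.2.succ_pos s.1.2⟩
  invFun y := (⟨(unshiftCol c y.1.1, y.1.2), isHookFilling_unshiftCol hr c y.2⟩,
    y.1.1 c.succ - y.1.1 c.castSucc - 1)
  left_inv s := by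
    refine Prod.ext (Subtype.ext (Prod.ext (unshiftCol_shiftCol c _ _) rfl)) ?_
    simp only [shiftCol_succ_sub_castSucc, Nat.add_sub_cancel]
  right_inv y := by
    have hc : 0 < y.1.1 c.succ - y.1.1 c.castSucc :=
      Nat.sub_pos_of_lt (y.2.1 Fin.castSucc_lt_succ)
    refine Subtype.ext (Prod.ext ?_ rfl)
    simp only [Nat.sub_add_cancel hc, shiftCol_unshiftCol c y.2.1.monotone]

theorem efOne_eq_tsum (n r : ℕ) (hr : 0 < r) (kc kr : ℕ → ℕ) :
    efOne n r hr kc kr = ∑' s : HookFilling n r hr × ℕ,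
      ((s.2 + 1 : ℕ) : ℝ)⁻¹ * rowWt n kr s.1.1.2 * colWt kc (fun i => s.2 + 1 + s.1.1.1 i) :=
  ((subtypePosProdEquiv (IsHookFilling hr)).symm.tsum_eq fun x =>
    (x.1.1 : ℝ)⁻¹ * rowWt n kr x.1.2.2 * colWt kc fun i => x.1.1 + x.1.2.1 i).symm

theorem hookVal_eq_tsum_shiftCol (n : ℕ) {r : ℕ} (hr : 0 < r) (e kr : ℕ → ℕ) (c : Fin r) :
    hookVal n r e kr = ∑' s : HookFilling n r hr × ℕ,
      rowWt n kr s.1.1.2 * colWt e (shiftCol c (s.2 + 1) s.1.1.1) :=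
  ((hookFillingShiftEquiv n hr c).tsum_eq fun y => rowWt n kr y.1.2 * colWt e y.1.1).symm

theorem hasSum_mul_harmonic_of_summable {n r : ℕ} {hr : 0 < r} {kc kr : ℕ → ℕ}
    (hskew : Summable fun x : SkewFilling n r hr =>
      (x.1.1 : ℝ)⁻¹ * rowWt n kr x.1.2.2 * colWt kc x.1.2.1) :
    HasSum (fun y : HookFilling n r hr =>
        rowWt n kr y.1.2 * colWt kc y.1.1 * harmonic (y.1.1 ⟨r - 1, by omega⟩))
      (skewOne n r hr kc kr) := by
  have hsigma := (subtypePosLeProdEquiv (IsHookFilling hr) fun y =>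
    y.1 ⟨r - 1, by omega⟩).symm.hasSum_iff.2 hskew.hasSum
  have hharm : ∀ y : HookFilling n r hr,
      rowWt n kr y.1.2 * colWt kc y.1.1 * harmonic (y.1.1 ⟨r - 1, by omega⟩) =
        ∑ j : Fin (y.1.1 ⟨r - 1, by omega⟩),
          ((j.val + 1 : ℕ) : ℝ)⁻¹ * rowWt n kr y.1.2 * colWt kc y.1.1 := by
    intro y
    rw [harmonic, ← Fin.sum_univ_eq_sum_range fun j => ((j + 1 : ℕ) : ℚ)⁻¹]
    push_cast
    rw [mul_comm, Finset.sum_mul]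
    simp only [mul_assoc]
  exact hsigma.sigma fun y => hharm y ▸ hasSum_fintype _

theorem rowWt_nonneg (n : ℕ) (kr : ℕ → ℕ) (b : Fin n → ℕ) : 0 ≤ rowWt n kr b := by
  unfold rowWt
  positivity

theorem rowWt_le_evenWt {n : ℕ} {kr : ℕ → ℕ} (hkr : ∀ j, 2 ≤ j → j ≤ n + 1 → 1 ≤ kr j)
    (hkrl : 0 < n → 2 ≤ kr (n + 1)) {b : Fin n → ℕ} (hb : ∀ j, 0 < b j) (hmono : Monotone b) :
    rowWt n kr b ≤ evenWt b := by
  cases n with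
  | zero => simp [rowWt, evenWt]
  | succ n =>
    exact inv_prod_pow_le_evenWt (c := Fin.last n) hb (fun j => hmono (Fin.le_last j))
      (fun j => hkr _ (by omega) (by omega)) (hkrl n.succ_pos)

theorem inv_mul_colWt_le_evenWt {r : ℕ} (hr : 0 < r) {kc : ℕ → ℕ}
    (hkc : ∀ i, 1 ≤ i → i ≤ r → 1 ≤ kc i) (hkcr : 2 ≤ kc r) {m : ℕ} {v : Fin r → ℕ} (hm : 0 < m)
    (hmv : m ≤ v ⟨r - 1, by omega⟩) (hv : Monotone v) (hpos : ∀ i, 0 < v i) :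
    (m : ℝ)⁻¹ * colWt kc v ≤ evenWt (Fin.cons m v : Fin (r + 1) → ℕ) := by
  obtain ⟨r, rfl⟩ := Nat.exists_eq_add_one.2 hr
  have h := inv_prod_pow_le_evenWt (x := (Fin.cons m v : Fin (r + 2) → ℕ))
    (k := Fin.cons 1 fun i : Fin (r + 1) => kc (i.val + 1)) (c := (Fin.last r).succ)
    (Fin.cases hm hpos) (Fin.cases hmv fun i => hv (Fin.le_last i))
    (Fin.cases le_rfl fun i => hkc _ (by omega) (by omega)) hkcr
  simpa [Fin.prod_univ_succ, colWt, mul_comm, mul_left_comm] using h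

theorem summable_skew {n r : ℕ} (hr : 0 < r) {kc kr : ℕ → ℕ}
    (hkc : ∀ i, 1 ≤ i → i ≤ r → 1 ≤ kc i) (hkcr : 2 ≤ kc r)
    (hkr : ∀ j, 2 ≤ j → j ≤ n + 1 → 1 ≤ kr j) (hkrl : 0 < n → 2 ≤ kr (n + 1)) :
    Summable fun x : SkewFilling n r hr =>
      (x.1.1 : ℝ)⁻¹ * rowWt n kr x.1.2.2 * colWt kc x.1.2.1 := by
  let entries : SkewFilling n r hr → (Fin (r + 1) → ℕ) × (Fin n → ℕ) := fun x =>
    (Fin.cons x.1.1 x.1.2.1, x.1.2.2)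
  have hinj : Function.Injective entries := by
    rintro ⟨⟨m, v, b⟩, _⟩ ⟨⟨m', v', b'⟩, _⟩ h
    simp only [entries, Prod.mk.injEq, Fin.cons_inj] at h
    obtain ⟨⟨rfl, rfl⟩, rfl⟩ := h
    rfl
  have hbound := ((summable_evenWt (Fin (r + 1))).mul_of_nonneg (summable_evenWt (Fin n))
    evenWt_nonneg evenWt_nonneg).comp_injective hinj
  refine hbound.of_nonneg_of_le (fun x => mul_nonneg (mul_nonneg (by positivity)
    (rowWt_nonneg _ _ _)) (colWt_nonneg _ _)) ?_
  rintro ⟨⟨m, v, b⟩, hm, hmv, hv, h0, hb, hvb⟩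
  rw [mul_right_comm]
  exact mul_le_mul
    (inv_mul_colWt_le_evenWt hr hkc hkcr hm hmv hv.monotone
      (pos_of_strictMono_of_pos_zero hr hv h0))
    (rowWt_le_evenWt hkr hkrl (fun j => h0.trans_le (hvb j)) hb)
    (rowWt_nonneg _ _ _) (evenWt_nonneg _)

theorem efOne_skew_decomposition_general {n r : ℕ} {hr : 0 < r} {kc kr : ℕ → ℕ}
    (hkcr : 2 ≤ kc r)
    (hskew : Summable fun x : SkewFilling n r hr =>
      (x.1.1 : ℝ)⁻¹ * rowWt n kr x.1.2.2 * colWt kc x.1.2.1) :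
    efOne n r hr kc kr =
      skewOne n r hr kc kr
        - ∑ i ∈ Finset.Icc 1 r,
            ∑ p ∈ (Finset.Icc 1 (kc i)).filter (fun p => 2 ≤ splitExp kc i p (r + 1)),
              hookVal n r (splitExp kc i p) kr := by
  have hsum := hasSum_mul_inv_sub_inv_add
    (fun y => mul_nonneg (rowWt_nonneg _ _ _) (colWt_nonneg _ _))
    (hasSum_mul_harmonic_of_summable hskew)
  rw [← sum_splittings kc r fun i p => hookVal n r (splitExp kc i p) kr, efOne_eq_tsum,
    Finset.sum_congr rfl fun q _ => hookVal_eq_tsum_shiftCol n hr _ kr q.1]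
  refine tsum_eq_sub_sum_tsum
    (fun s => mul_nonneg (mul_nonneg (by positivity) (rowWt_nonneg _ _ _)) (colWt_nonneg _ _))
    (fun q _ s => mul_nonneg (rowWt_nonneg _ _ _) (colWt_nonneg _ _)) (hsum.congr_fun ?_)
  intro s
  have hpos := pos_of_strictMono_of_pos_zero hr s.1.2.1 s.1.2.2.1
  rw [mul_assoc (rowWt _ _ _), ← inv_mul_colWt_add_sum_splittings hkcr (c := ⟨r - 1, by omega⟩)
    (Nat.sub_add_cancel hr) (m := s.2 + 1) s.2.succ_pos hpos, mul_add, Finset.mul_sum]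
  ring

/-- Decomposition of the elementary factorial value with one extra exponent-1 variable:
`ζ_{λ,1}(𝐤,(1)) = ζ_skew − Σ_{i=1}^{r} Σ_{ℓ_i+ℓ_{i+1}=1+k_{i1}, ℓ_i,ℓ_{i+1}≥1, ℓ_{r+1}≥2}`
`ζ_{(λ₁,1^r)}(column (ℓ₁,…,ℓ_{r+1}), row 𝐤)`. -/
theorem efOne_skew_decomposition (n r : ℕ) (hr : 0 < r) (kc kr : ℕ → ℕ)
    (hkc : ∀ i, 1 ≤ i → i ≤ r → 1 ≤ kc i) (hkcr : 2 ≤ kc r)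
    (hkr : ∀ j, 2 ≤ j → j ≤ n + 1 → 1 ≤ kr j) (hkrl : 0 < n → 2 ≤ kr (n + 1)) :
    efOne n r hr kc kr =
      skewOne n r hr kc kr
        - ∑ i ∈ Finset.Icc 1 r,
            ∑ p ∈ (Finset.Icc 1 (kc i)).filter (fun p => 2 ≤ splitExp kc i p (r + 1)),
              hookVal n r (splitExp kc i p) kr :=
  efOne_skew_decomposition_general hkcr (summable_skew hr hkc hkcr hkr hkrl)
end
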